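/- (Liouville theorem for subsolutions) Let n ≥ 1, s ∈ (0,1), let K be an admissible kernel, and assume 1 < q ≤ n/(n−2s) if n > 2s, and 1 < q < ∞ if n ≤ 2s. Let u : ℝⁿ → [0,∞) be measurable with u ∈ L^q_loc(ℝⁿ) ∩ L¹_{2s}(ℝⁿ), and suppose u is a weak subsolution of L_K u = −u^q, i.e. ∫_{ℝⁿ} u(x) L_K φ(x) dx ≤ −∫_{ℝⁿ} u(x)^q φ(x) dx for every φ ∈ C_c^∞(ℝⁿ) with φ ≥ 0. Then u = 0 almost everywhere in ℝⁿ. -/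

import Mathlib

open MeasureTheory Metric

noncomputable section

abbrev Euc (n : ℕ) := EuclideanSpace ℝ (Fin n)

def IsAdmissibleKernel (n : ℕ) (s lam Lam : ℝ) (K : Euc n → ℝ) : Prop :=
  0 < lam ∧ lam ≤ Lam ∧ Measurable K ∧
  (∀ z : Euc n, z ≠ 0 → K z = K (-z)) ∧
  (∀ z : Euc n, z ≠ 0 →
    lam * ‖z‖ ^ (-(n : ℝ) - 2 * s) ≤ K z ∧ K z ≤ Lam * ‖z‖ ^ (-(n : ℝ) - 2 * s))

def LK (n : ℕ) (K φ : Euc n → ℝ) (x : Euc n) : ℝ :=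
  (1 / 2) * ∫ z : Euc n, (2 * φ x - φ (x + z) - φ (x - z)) * K z

def IsTestFun (n : ℕ) (φ : Euc n → ℝ) : Prop :=
  ContDiff ℝ (⊤ : ℕ∞) φ ∧ HasCompactSupport φ

def MemL1Tail (n : ℕ) (s : ℝ) (u : Euc n → ℝ) : Prop :=
  LocallyIntegrable u volume ∧
  Integrable (fun x : Euc n => |u x| * (1 + ‖x‖) ^ (-(n : ℝ) - 2 * s)) volume

def MemLqLoc (n : ℕ) (q : ℝ) (u : Euc n → ℝ) : Prop :=
  ∀ R : ℝ, 0 < R → IntegrableOn (fun x : Euc n => u x ^ q) (ball (0 : Euc n) R) volume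

def IsWeakSupersol (n : ℕ) (s q : ℝ) (K u : Euc n → ℝ) : Prop :=
  Measurable u ∧ (∀ x, 0 ≤ u x) ∧ MemLqLoc n q u ∧ MemL1Tail n s u ∧
  ∀ φ : Euc n → ℝ, IsTestFun n φ → (∀ x, 0 ≤ φ x) →
    (∫ x : Euc n, u x ^ q * φ x) ≤ ∫ x : Euc n, u x * LK n K φ x

def IsCutoff (n : ℕ) (η : Euc n → ℝ) : Prop :=
  ContDiff ℝ (⊤ : ℕ∞) η ∧ (∀ x, 0 ≤ η x ∧ η x ≤ 1) ∧
  (∀ x : Euc n, ‖x‖ ≤ 1 → η x = 1) ∧ (∀ x : Euc n, 2 ≤ ‖x‖ → η x = 0)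

def cutoffSq (n : ℕ) (η : Euc n → ℝ) (R : ℝ) : Euc n → ℝ :=
  fun x => (η (R⁻¹ • x)) ^ 2

/-!
Let `w_R (x) = (1 + |x| / R) ^ (-n - 2s)`. If `η` is a bump function, then scaling gives
`|L_K (η (· / ρ))| ≤ C ρ ^ (-2s) w_ρ`, so testing with `η (· / ρ)` bounds `∫_{B_ρ} u ^ q` by
`C ρ ^ (-2s) ∫ u w_ρ`. Summing over the dyadic radii `ρ = 2 ^ k R` gives an inequality with the same
weight on both sides,
  `∫ u ^ q w_R ≤ C R ^ (-2s) ∫ u w_R`.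
Since `∫ w_R = R ^ n ∫ w_1`, Hölder's inequality bounds the right-hand side by a multiple of
`(∫ u ^ q w_R) ^ (1 / q)` for `R ≥ 1`: the power `R ^ (-2s + n (1 - 1 / q))` is bounded exactly when
`q` is at most critical. Absorbing it yields `∫ u ^ q w_R ≤ A` uniformly in `R`, hence `u ^ q` is
integrable. Now split `u` at a radius `M`: the inner part contributes `O(R ^ (-2s))`, and the outer
part is at most a multiple of `(∫_{|x| > M} u ^ q) ^ (1 / q)`, again by Hölder. Letting `R → ∞` and
then `M → ∞` gives `∫ u ^ q = 0`.
-/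

namespace NonlocalLiouville

open Module Filter Topology
open scoped ContDiff

lemma setIntegral_le_integral_mul_of_one_le {α : Type*} [MeasurableSpace α] {μ : Measure α}
    {f φ : α → ℝ} {S : Set α} (hS : MeasurableSet S) (hf₀ : ∀ x, 0 ≤ f x)
    (hφ₀ : ∀ x, 0 ≤ φ x) (hφ : ∀ x ∈ S, 1 ≤ φ x)
    (hint : Integrable (fun x => f x * φ x) μ) :
    ∫ x in S, f x ∂μ ≤ ∫ x, f x * φ x ∂μ :=
  calc ∫ x in S, f x ∂μ ≤ ∫ x in S, f x * φ x ∂μ := by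
        refine integral_mono_of_nonneg (ae_of_all _ hf₀) hint.integrableOn ?_
        filter_upwards [ae_restrict_mem hS] with x hx
        exact le_mul_of_one_le_right (hf₀ x) (hφ x hx)
    _ ≤ ∫ x, f x * φ x ∂μ :=
        setIntegral_le_integral hint (ae_of_all _ fun x => mul_nonneg (hf₀ x) (hφ₀ x))

lemma integral_mul_le_rpow_mul_rpow {α : Type*} [MeasurableSpace α] {μ : Measure α} {g w : α → ℝ}
    {p q : ℝ} (hpq : q.HolderConjugate p) (hg₀ : ∀ x, 0 ≤ g x) (hw₀ : ∀ x, 0 ≤ w x)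
    (hg : AEStronglyMeasurable g μ) (hw : Integrable w μ)
    (hgw : Integrable (fun x => g x ^ q * w x) μ) :
    ∫ x, g x * w x ∂μ ≤ (∫ x, g x ^ q * w x ∂μ) ^ (1 / q) * (∫ x, w x ∂μ) ^ (1 / p) := by
  have hpow {r : ℝ} (hr : 0 < r) (x : α) : (w x ^ (1 / r)) ^ r = w x := by
    rw [← Real.rpow_mul (hw₀ x), one_div_mul_cancel hr.ne', Real.rpow_one]
  have hG₀ (x : α) : 0 ≤ g x * w x ^ (1 / q) := mul_nonneg (hg₀ x) (Real.rpow_nonneg (hw₀ x) _)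
  have hH₀ (x : α) : 0 ≤ w x ^ (1 / p) := Real.rpow_nonneg (hw₀ x) _
  have hGq (x : α) : (g x * w x ^ (1 / q)) ^ q = g x ^ q * w x := by
    rw [Real.mul_rpow (hg₀ x) (Real.rpow_nonneg (hw₀ x) _), hpow hpq.pos]
  have hGH (x : α) : g x * w x ^ (1 / q) * w x ^ (1 / p) = g x * w x := by
    rw [mul_assoc, ← Real.rpow_add_of_nonneg (hw₀ x) hpq.one_div_nonneg hpq.symm.one_div_nonneg,
      hpq.one_div_add_one_div, div_one, Real.rpow_one]
  have hwr (r : ℝ) : AEStronglyMeasurable (fun x => w x ^ r) μ :=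
    (hw.aemeasurable.pow_const r).aestronglyMeasurable
  have hmem {r : ℝ} (hr : 0 < r) {F : α → ℝ} (hF₀ : ∀ x, 0 ≤ F x)
      (hFm : AEStronglyMeasurable F μ) (hF : Integrable (fun x => F x ^ r) μ) :
      MemLp F (ENNReal.ofReal r) μ := by
    refine (integrable_norm_rpow_iff hFm (by simpa) ENNReal.ofReal_ne_top).1 ?_
    simpa only [ENNReal.toReal_ofReal hr.le, Real.norm_of_nonneg (hF₀ _)] using hF
  have hholder := integral_mul_le_Lp_mul_Lq_of_nonneg hpq (ae_of_all μ hG₀) (ae_of_all μ hH₀)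
    (hmem hpq.pos hG₀ (hg.mul (hwr _)) (by simpa only [hGq] using hgw))
    (hmem hpq.symm.pos hH₀ (hwr _) (by simpa only [hpow hpq.symm.pos] using hw))
  simpa only [hGq, hGH, hpow hpq.symm.pos] using hholder

lemma le_rpow_of_le_mul_rpow_one_div {a B p q : ℝ} (hpq : q.HolderConjugate p) (ha : 0 ≤ a)
    (hB : 0 ≤ B) (h : a ≤ B * a ^ (1 / q)) : a ≤ B ^ p := by
  rcases ha.eq_or_lt with rfl | ha
  · positivity
  have hroot : a ^ p⁻¹ ≤ B := by
    rw [← hpq.one_sub_inv, Real.rpow_sub ha, Real.rpow_one, div_le_iff₀ (by positivity)]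
    rwa [one_div] at h
  exact (Real.rpow_inv_le_iff_of_pos ha.le hB hpq.symm.pos).1 hroot

variable {E : Type*} [NormedAddCommGroup E]

/-- The weight `(1 + |x| / R) ^ (-γ)`, comparable to `1` on the ball of radius `R`. For `γ = n + 2s`
it is, up to a factor `R ^ (-2s)`, the decay of `L_K` applied to a bump function of radius `R`. -/
def decayWeight (γ R : ℝ) (x : E) : ℝ :=
  (1 + ‖x‖ / R) ^ (-γ)

section DecayWeight

variable {γ R : ℝ} {x : E}

lemma decayWeight_pos (hR : 0 ≤ R) (x : E) : 0 < decayWeight γ R x := by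
  unfold decayWeight; positivity

lemma decayWeight_nonneg (hR : 0 ≤ R) (x : E) : 0 ≤ decayWeight γ R x :=
  (decayWeight_pos hR x).le

lemma decayWeight_le_one (hγ : 0 ≤ γ) (hR : 0 ≤ R) (x : E) : decayWeight γ R x ≤ 1 :=
  Real.rpow_le_one_of_one_le_of_nonpos (le_add_of_nonneg_right (by positivity)) (by linarith)

lemma rpow_neg_le_mul_decayWeight {t c : ℝ} (hγ : 0 ≤ γ) (hR : 0 ≤ R) (ht : 0 ≤ t) (hc : 0 < c)
    (h : 1 + ‖x‖ / R ≤ c * t) : t ^ (-γ) ≤ c ^ γ * decayWeight γ R x := by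
  rw [← div_le_iff₀' (by positivity), div_eq_mul_inv, ← Real.rpow_neg hc.le, mul_comm,
    ← Real.mul_rpow hc.le ht]
  exact Real.rpow_le_rpow_of_nonpos (by positivity) h (by linarith)

lemma two_rpow_neg_le_decayWeight (hγ : 0 ≤ γ) (hR : 0 < R) (hx : ‖x‖ ≤ R) :
    2 ^ (-γ) ≤ decayWeight γ R x := by
  simpa using rpow_neg_le_mul_decayWeight hγ hR.le two_pos.le one_pos
    (by linarith [(div_le_one hR).2 hx])

lemma decayWeight_le_rpow_neg {t : ℝ} (hγ : 0 ≤ γ) (hR : 0 < R) (ht : 0 < t) (hx : t * R ≤ ‖x‖) :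
    decayWeight γ R x ≤ t ^ (-γ) := by
  refine Real.rpow_le_rpow_of_nonpos ht ?_ (by linarith)
  linarith [(le_div_iff₀ hR).2 hx]

lemma decayWeight_mul_le {t : ℝ} (hγ : 0 ≤ γ) (hR : 0 < R) (ht : 1 ≤ t) (x : E) :
    decayWeight γ (t * R) x ≤ t ^ γ * decayWeight γ R x := by
  refine rpow_neg_le_mul_decayWeight hγ hR.le (by positivity) (by linarith) ?_
  have hexpand : t * (1 + ‖x‖ / (t * R)) = t + ‖x‖ / R := by field_simp
  linarith

lemma decayWeight_mono {R' : ℝ} (hγ : 0 ≤ γ) (hR : 0 < R) (hR' : R ≤ R') (x : E) :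
    decayWeight γ R x ≤ decayWeight γ R' x := by
  have hR'₀ : 0 < R' := hR.trans_le hR'
  exact Real.rpow_le_rpow_of_nonpos (by positivity) (by gcongr) (by linarith)

lemma decayWeight_le_max_rpow_mul (hγ : 0 ≤ γ) (hR : 0 < R) (x : E) :
    decayWeight γ R x ≤ max R 1 ^ γ * decayWeight γ 1 x := by
  simpa using (decayWeight_mono hγ hR (le_max_left R 1) x).trans
    (by simpa using decayWeight_mul_le hγ one_pos (le_max_right R 1) x)

lemma decayWeight_one_inv_smul [NormedSpace ℝ E] (hR : 0 ≤ R) (x : E) :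
    decayWeight γ 1 (R⁻¹ • x) = decayWeight γ R x := by
  rw [decayWeight, decayWeight, norm_smul, norm_inv, Real.norm_of_nonneg hR, div_one,
    inv_mul_eq_div]

variable [MeasurableSpace E] [OpensMeasurableSpace E] {μ : Measure E} {f : E → ℝ}

lemma measurable_decayWeight : Measurable (decayWeight γ R : E → ℝ) := by
  unfold decayWeight; fun_prop

lemma integrable_mul_decayWeight (hf : Integrable f μ) (hγ : 0 ≤ γ) (hR : 0 ≤ R) :
    Integrable (fun x => f x * decayWeight γ R x) μ :=
  hf.mul_bdd (c := 1) measurable_decayWeight.aestronglyMeasurable <| ae_of_all _ fun x => by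
    rw [Real.norm_of_nonneg (decayWeight_nonneg hR x)]
    exact decayWeight_le_one hγ hR x

lemma integrable_mul_decayWeight_of_one (hf : Integrable (fun x => f x * decayWeight γ 1 x) μ)
    (hγ : 0 ≤ γ) (hR : 0 < R) : Integrable (fun x => f x * decayWeight γ R x) μ := by
  have hratio : Integrable
      (fun x => f x * decayWeight γ 1 x * (decayWeight γ R x / decayWeight γ 1 x)) μ := by
    refine hf.mul_bdd (c := max R 1 ^ γ)
      (measurable_decayWeight.div measurable_decayWeight).aestronglyMeasurable
      (ae_of_all _ fun x => ?_)
    have hpos : 0 < decayWeight γ 1 x := decayWeight_pos zero_le_one x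
    rw [Real.norm_of_nonneg (div_nonneg (decayWeight_nonneg hR.le x) hpos.le), div_le_iff₀ hpos]
    exact decayWeight_le_max_rpow_mul hγ hR x
  refine hratio.congr (ae_of_all _ fun x => ?_)
  simp only [mul_assoc, mul_div_cancel₀ _ (decayWeight_pos zero_le_one x).ne']

lemma setIntegral_closedBall_le_decayWeight (hf₀ : ∀ x, 0 ≤ f x) (hγ : 0 ≤ γ) (hR : 0 < R)
    (hf : Integrable (fun x => f x * decayWeight γ R x) μ) :
    ∫ x in closedBall 0 R, f x ∂μ ≤ 2 ^ γ * ∫ x, f x * decayWeight γ R x ∂μ := by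
  have hone : ∀ x ∈ closedBall (0 : E) R, 1 ≤ 2 ^ γ * decayWeight γ R x := fun x hx => by
    rw [← inv_le_iff_one_le_mul₀' (by positivity), ← Real.rpow_neg two_pos.le]
    exact two_rpow_neg_le_decayWeight hγ hR (mem_closedBall_zero_iff.1 hx)
  rw [← integral_const_mul]
  simp only [← mul_left_comm (f _)]
  exact setIntegral_le_integral_mul_of_one_le measurableSet_closedBall hf₀
    (fun x => mul_nonneg (by positivity) (decayWeight_nonneg hR.le x)) hone
    (by simpa only [mul_left_comm] using hf.const_mul (2 ^ γ))

lemma setIntegral_sdiff_mul_decayWeight_le {S : Set E} {t : ℝ} (hf₀ : ∀ x, 0 ≤ f x)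
    (hS : MeasurableSet S) (hf : IntegrableOn f S μ) (hγ : 0 ≤ γ) (hR : 0 < R) (ht : 0 < t) :
    ∫ x in S \ closedBall 0 (t * R), f x * decayWeight γ R x ∂μ ≤ t ^ (-γ) * ∫ x in S, f x ∂μ := by
  rw [← integral_const_mul]
  calc ∫ x in S \ closedBall 0 (t * R), f x * decayWeight γ R x ∂μ
      ≤ ∫ x in S \ closedBall 0 (t * R), t ^ (-γ) * f x ∂μ := by
        refine setIntegral_mono_on
          (integrable_mul_decayWeight (hf.mono_set Set.sdiff_subset) hγ hR.le)
          ((hf.mono_set Set.sdiff_subset).const_mul _) (hS.diff measurableSet_closedBall)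
          fun x hx => ?_
        rw [mul_comm]
        refine mul_le_mul_of_nonneg_right (decayWeight_le_rpow_neg hγ hR ht ?_) (hf₀ x)
        exact le_of_not_ge fun h => hx.2 (mem_closedBall_zero_iff.2 h)
    _ ≤ ∫ x in S, t ^ (-γ) * f x ∂μ :=
        setIntegral_mono_set (hf.const_mul _)
          (ae_of_all _ fun x => mul_nonneg (by positivity) (hf₀ x)) Set.sdiff_subset.eventuallyLE

variable [ProperSpace E]

lemma locallyIntegrable_of_integrable_mul_decayWeight (hR : 0 ≤ R)
    (hf : Integrable (fun x => f x * decayWeight γ R x) μ) : LocallyIntegrable f μ := by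
  have hcont : Continuous fun x : E => (decayWeight γ R x)⁻¹ := by
    refine Continuous.inv₀ (Continuous.rpow_const (by fun_prop) fun x => Or.inl ?_)
      fun x => (decayWeight_pos hR x).ne'
    positivity
  have hquot := (hf.locallyIntegrable.locallyIntegrableOn Set.univ).mul_continuousOn
    hcont.continuousOn isOpen_univ.isLocallyClosed
  simpa only [mul_inv_cancel_right₀ (decayWeight_pos hR _).ne', locallyIntegrableOn_univ]
    using hquot

lemma setIntegral_mul_decayWeight_le_sum (hf₀ : ∀ x, 0 ≤ f x) (hf : LocallyIntegrable f μ)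
    (hγ : 0 ≤ γ) (hR : 0 < R) (N : ℕ) :
    ∫ x in closedBall 0 (2 ^ N * R), f x * decayWeight γ R x ∂μ ≤
      ∑ k ∈ Finset.range (N + 1),
        2 ^ γ * ((2 ^ k : ℝ) ^ (-γ) * ∫ x in closedBall 0 (2 ^ k * R), f x ∂μ) := by
  have hball (r : ℝ) : IntegrableOn f (closedBall 0 r) μ :=
    hf.integrableOn_isCompact (isCompact_closedBall _ _)
  have hwball (r : ℝ) : IntegrableOn (fun x => f x * decayWeight γ R x) (closedBall 0 r) μ :=
    integrable_mul_decayWeight (hball r) hγ hR.le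
  induction N with
  | zero =>
    simp only [pow_zero, one_mul, zero_add, Finset.sum_range_one, Real.one_rpow]
    calc ∫ x in closedBall 0 R, f x * decayWeight γ R x ∂μ
        ≤ ∫ x in closedBall 0 R, f x ∂μ :=
          integral_mono (hwball R) (hball R) fun x =>
            mul_le_of_le_one_right (hf₀ x) (decayWeight_le_one hγ hR.le x)
      _ ≤ 2 ^ γ * ∫ x in closedBall 0 R, f x ∂μ :=
          le_mul_of_one_le_left (integral_nonneg hf₀) (Real.one_le_rpow one_le_two hγ)
  | succ N ih =>
    have hsub : closedBall (0 : E) (2 ^ N * R) ⊆ closedBall 0 (2 ^ (N + 1) * R) :=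
      closedBall_subset_closedBall (by gcongr <;> simp)
    have hconst : (2 : ℝ) ^ γ * (2 ^ (N + 1)) ^ (-γ) = (2 ^ N) ^ (-γ) := by
      rw [pow_succ, Real.mul_rpow (by positivity) two_pos.le, mul_left_comm,
        ← Real.rpow_add two_pos, add_neg_cancel, Real.rpow_zero, mul_one]
    have hshell := setIntegral_sdiff_mul_decayWeight_le (t := 2 ^ N) hf₀ measurableSet_closedBall
      (hball (2 ^ (N + 1) * R)) hγ hR (by positivity)
    rw [setIntegral_sdiff measurableSet_closedBall (hwball _) hsub, ← hconst] at hshell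
    rw [Finset.sum_range_succ]
    linarith

lemma integrable_mul_decayWeight_of_dyadic (hf₀ : ∀ x, 0 ≤ f x) (hf : LocallyIntegrable f μ)
    (hγ : 0 ≤ γ) (hR : 0 < R) {D r : ℝ} (hr : r ∈ Set.Ico (0 : ℝ) 1)
    (h : ∀ k : ℕ, (2 ^ k : ℝ) ^ (-γ) * ∫ x in closedBall 0 (2 ^ k * R), f x ∂μ ≤ D * r ^ k) :
    Integrable (fun x => f x * decayWeight γ R x) μ ∧
      ∫ x, f x * decayWeight γ R x ∂μ ≤ 2 ^ γ * (D * (1 - r)⁻¹) := by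
  have hD : 0 ≤ D := (integral_nonneg hf₀ : _ ≤ ∫ x in closedBall 0 R, f x ∂μ).trans
    (by simpa using h 0)
  have hcover : AECover μ atTop fun N : ℕ => closedBall (0 : E) (2 ^ N * R) :=
    aecover_closedBall
      ((tendsto_pow_atTop_atTop_of_one_lt one_lt_two).atTop_mul_const hR)
  have hbound (N : ℕ) : ∫ x in closedBall 0 (2 ^ N * R), f x * decayWeight γ R x ∂μ ≤
      2 ^ γ * (D * (1 - r)⁻¹) :=
    calc ∫ x in closedBall 0 (2 ^ N * R), f x * decayWeight γ R x ∂μ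
        ≤ ∑ k ∈ Finset.range (N + 1), 2 ^ γ * (D * r ^ k) :=
          (setIntegral_mul_decayWeight_le_sum hf₀ hf hγ hR N).trans
            (Finset.sum_le_sum fun k _ => mul_le_mul_of_nonneg_left (h k) (by positivity))
      _ = 2 ^ γ * (D * ∑ k ∈ Finset.range (N + 1), r ^ k) := by simp only [Finset.mul_sum]
      _ ≤ 2 ^ γ * (D * (1 - r)⁻¹) := by
          rw [← tsum_geometric_of_lt_one hr.1 hr.2]
          gcongr
          exact (summable_geometric_of_lt_one hr.1 hr.2).sum_le_tsum _ fun k _ =>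
            pow_nonneg hr.1 k
  have hint : Integrable (fun x => f x * decayWeight γ R x) μ :=
    hcover.integrable_of_integral_bounded_of_nonneg_ae _
      (fun N => integrable_mul_decayWeight
        (hf.integrableOn_isCompact (isCompact_closedBall _ _)) hγ hR.le)
      (ae_of_all _ fun x => mul_nonneg (hf₀ x) (decayWeight_nonneg hR.le x))
      (Eventually.of_forall hbound)
  exact ⟨hint, le_of_tendsto' (hcover.integral_tendsto_of_countably_generated hint) hbound⟩

lemma integrable_of_integral_mul_decayWeight_le (hf₀ : ∀ x, 0 ≤ f x) (hf : LocallyIntegrable f μ)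
    (hγ : 0 ≤ γ) {A : ℝ} (hint : ∀ R, 0 < R → Integrable (fun x => f x * decayWeight γ R x) μ)
    (hA : ∀ᶠ R in atTop, ∫ x, f x * decayWeight γ R x ∂μ ≤ A) : Integrable f μ := by
  refine (aecover_closedBall tendsto_id).integrable_of_integral_bounded_of_nonneg_ae (2 ^ γ * A)
    (fun R => hf.integrableOn_isCompact (isCompact_closedBall (0 : E) R)) (ae_of_all _ hf₀) ?_
  filter_upwards [hA, eventually_gt_atTop 0] with R hR hpos
  exact (setIntegral_closedBall_le_decayWeight hf₀ hγ hpos (hint R hpos)).trans (by gcongr)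

end DecayWeight

section CriticalRange

variable [NormedSpace ℝ E] [FiniteDimensional ℝ E] [MeasurableSpace E] [BorelSpace E]
  {μ : Measure E} [μ.IsAddHaarMeasure] {u : E → ℝ} {γ p q : ℝ}

lemma integrable_decayWeight (hγ : (finrank ℝ E : ℝ) < γ) {R : ℝ} (hR : 0 < R) :
    Integrable (decayWeight γ R) μ := by
  simpa only [one_mul] using integrable_mul_decayWeight_of_one (f := fun _ => 1)
    (by simpa [decayWeight] using integrable_one_add_norm (μ := μ) hγ)
    ((Nat.cast_nonneg _).trans hγ.le) hR

lemma integral_decayWeight {R : ℝ} (hR : 0 ≤ R) :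
    ∫ x, decayWeight γ R x ∂μ = R ^ (finrank ℝ E : ℝ) * ∫ x, decayWeight γ 1 x ∂μ := by
  simpa only [decayWeight_one_inv_smul hR, smul_eq_mul, Real.rpow_natCast] using
    Measure.integral_comp_inv_smul_of_nonneg μ (decayWeight γ 1) hR

lemma rpow_mul_setIntegral_mul_decayWeight_le (hγ : (finrank ℝ E : ℝ) < γ)
    (hpq : q.HolderConjugate p) (hcrit : finrank ℝ E ≤ (γ - finrank ℝ E) * p)
    (hu₀ : ∀ x, 0 ≤ u x) (hum : AEStronglyMeasurable u μ) {R : ℝ} (hR : 1 ≤ R) (S : Set E)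
    (huq : IntegrableOn (fun x => u x ^ q * decayWeight γ R x) S μ) :
    R ^ (finrank ℝ E - γ) * ∫ x in S, u x * decayWeight γ R x ∂μ ≤
      (∫ x, decayWeight γ 1 x ∂μ) ^ (1 / p) *
        (∫ x in S, u x ^ q * decayWeight γ R x ∂μ) ^ (1 / q) := by
  have hR₀ : 0 < R := by linarith
  have hw₀ : ∀ x : E, 0 ≤ decayWeight γ R x := decayWeight_nonneg hR₀.le
  have hw : Integrable (decayWeight γ R) μ := integrable_decayWeight hγ hR₀
  set J := ∫ x : E, decayWeight γ 1 x ∂μ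
  set A := ∫ x in S, u x ^ q * decayWeight γ R x ∂μ
  have hA : 0 ≤ A := integral_nonneg fun x => mul_nonneg (Real.rpow_nonneg (hu₀ x) q) (hw₀ x)
  have hJ : 0 ≤ J := integral_nonneg (decayWeight_nonneg zero_le_one)
  have hexp : finrank ℝ E - γ + finrank ℝ E * (1 / p) ≤ 0 := by
    rw [mul_one_div]
    linarith [(div_le_iff₀ hpq.symm.pos).2 hcrit]
  calc R ^ (finrank ℝ E - γ) * ∫ x in S, u x * decayWeight γ R x ∂μ
      ≤ R ^ (finrank ℝ E - γ) * (A ^ (1 / q) * (∫ x in S, decayWeight γ R x ∂μ) ^ (1 / p)) := by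
        gcongr
        exact integral_mul_le_rpow_mul_rpow hpq hu₀ hw₀ hum.restrict hw.integrableOn huq
    _ ≤ R ^ (finrank ℝ E - γ) * (A ^ (1 / q) * (R ^ (finrank ℝ E : ℝ) * J) ^ (1 / p)) := by
        rw [← integral_decayWeight hR₀.le]
        have := hpq.symm.one_div_nonneg
        gcongr
        · exact integral_nonneg hw₀
        · exact ae_of_all _ hw₀
        · exact Measure.restrict_le_self
    _ = R ^ (finrank ℝ E - γ + finrank ℝ E * (1 / p)) * (J ^ (1 / p) * A ^ (1 / q)) := by
        rw [Real.mul_rpow (by positivity) hJ, ← Real.rpow_mul hR₀.le, Real.rpow_add hR₀]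
        ring
    _ ≤ J ^ (1 / p) * A ^ (1 / q) :=
        mul_le_of_le_one_left (by positivity) (Real.rpow_le_one_of_one_le_of_nonpos hR hexp)

lemma rpow_mul_integral_mul_decayWeight_le_split (hγ : (finrank ℝ E : ℝ) < γ)
    (hpq : q.HolderConjugate p) (hcrit : finrank ℝ E ≤ (γ - finrank ℝ E) * p)
    (hu₀ : ∀ x, 0 ≤ u x) (hu : Integrable (fun x => u x * decayWeight γ 1 x) μ)
    (huq : Integrable (fun x => u x ^ q) μ) {R : ℝ} (hR : 1 ≤ R) (M : ℝ) :
    R ^ (finrank ℝ E - γ) * ∫ x, u x * decayWeight γ R x ∂μ ≤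
      R ^ (finrank ℝ E - γ) * ∫ x in closedBall 0 M, u x ∂μ +
        (∫ x, decayWeight γ 1 x ∂μ) ^ (1 / p) *
          (∫ x in (closedBall 0 M)ᶜ, u x ^ q ∂μ) ^ (1 / q) := by
  have hR₀ : 0 < R := by linarith
  have hγ₀ : 0 ≤ γ := (Nat.cast_nonneg _).trans hγ.le
  have huR := integrable_mul_decayWeight_of_one hu hγ₀ hR₀
  have huqR := integrable_mul_decayWeight huq hγ₀ hR₀.le
  have hul : LocallyIntegrable u μ := locallyIntegrable_of_integrable_mul_decayWeight zero_le_one hu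
  have hnear : ∫ x in closedBall 0 M, u x * decayWeight γ R x ∂μ ≤
      ∫ x in closedBall 0 M, u x ∂μ :=
    integral_mono huR.integrableOn (hul.integrableOn_isCompact (isCompact_closedBall _ _)) fun x =>
      mul_le_of_le_one_right (hu₀ x) (decayWeight_le_one hγ₀ hR₀.le x)
  have hfar := rpow_mul_setIntegral_mul_decayWeight_le hγ hpq hcrit hu₀ hul.aestronglyMeasurable hR
    (closedBall 0 M)ᶜ huqR.integrableOn
  have htail : ∫ x in (closedBall 0 M)ᶜ, u x ^ q * decayWeight γ R x ∂μ ≤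
      ∫ x in (closedBall 0 M)ᶜ, u x ^ q ∂μ :=
    integral_mono huqR.integrableOn huq.integrableOn fun x =>
      mul_le_of_le_one_right (Real.rpow_nonneg (hu₀ x) q) (decayWeight_le_one hγ₀ hR₀.le x)
  have hJ : 0 ≤ ∫ x : E, decayWeight γ 1 x ∂μ := integral_nonneg (decayWeight_nonneg zero_le_one)
  have hq := hpq.one_div_nonneg
  rw [← integral_add_compl measurableSet_closedBall huR, mul_add]
  refine add_le_add (by gcongr) (hfar.trans ?_)
  gcongr
  exact integral_nonneg fun x =>
    mul_nonneg (Real.rpow_nonneg (hu₀ x) q) (decayWeight_nonneg hR₀.le x)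

lemma tendsto_rpow_mul_integral_mul_decayWeight (hγ : (finrank ℝ E : ℝ) < γ)
    (hpq : q.HolderConjugate p) (hcrit : finrank ℝ E ≤ (γ - finrank ℝ E) * p)
    (hu₀ : ∀ x, 0 ≤ u x) (hu : Integrable (fun x => u x * decayWeight γ 1 x) μ)
    (huq : Integrable (fun x => u x ^ q) μ) :
    Tendsto (fun R : ℝ => R ^ (finrank ℝ E - γ) * ∫ x, u x * decayWeight γ R x ∂μ) atTop (𝓝 0) := by
  set J := ∫ x : E, decayWeight γ 1 x ∂μ
  have htail : Tendsto (fun M => ∫ x in (closedBall (0 : E) M)ᶜ, u x ^ q ∂μ) atTop (𝓝 0) := by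
    have hball := (aecover_closedBall (μ := μ) (x := (0 : E))
      tendsto_id).integral_tendsto_of_countably_generated huq
    simpa only [setIntegral_compl measurableSet_closedBall huq, sub_self, id] using
      hball.const_sub (∫ x, u x ^ q ∂μ)
  have htail' : Tendsto (fun M => J ^ (1 / p) *
      (∫ x in (closedBall (0 : E) M)ᶜ, u x ^ q ∂μ) ^ (1 / q)) atTop (𝓝 0) := by
    simpa [hpq.pos.ne'] using
      (htail.rpow_const (Or.inr hpq.one_div_nonneg)).const_mul (J ^ (1 / p))
  have hdecay : Tendsto (fun R : ℝ => R ^ (finrank ℝ E - γ)) atTop (𝓝 0) := by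
    simpa only [neg_sub] using tendsto_rpow_neg_atTop (sub_pos.2 hγ)
  refine tendsto_order.2 ⟨fun a ha => ?_, fun ε hε => ?_⟩
  · filter_upwards [eventually_ge_atTop 0] with R hR
    exact ha.trans_le <| mul_nonneg (by positivity) <| integral_nonneg fun x =>
      mul_nonneg (hu₀ x) (decayWeight_nonneg hR x)
  · obtain ⟨M, hM⟩ := (htail'.eventually_lt_const hε).exists
    have hlim := (hdecay.mul_const (∫ x in closedBall (0 : E) M, u x ∂μ)).add_const
      (J ^ (1 / p) * (∫ x in (closedBall (0 : E) M)ᶜ, u x ^ q ∂μ) ^ (1 / q))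
    rw [zero_mul, zero_add] at hlim
    filter_upwards [hlim.eventually_lt_const hM, eventually_ge_atTop 1] with R hlt hR
    exact (rpow_mul_integral_mul_decayWeight_le_split hγ hpq hcrit hu₀ hu huq hR M).trans_lt hlt

end CriticalRange

section Kernel

variable [MeasurableSpace E]

/-- Measurable kernels, of any sign, of size at most `Λ |z| ^ (-γ)`: the upper half of
admissibility, with `γ = n + 2s`. -/
structure IsBoundedKernel (γ Λ : ℝ) (K : E → ℝ) : Prop where
  measurable : Measurable K
  abs_le : ∀ z, z ≠ 0 → |K z| ≤ Λ * ‖z‖ ^ (-γ)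

lemma IsBoundedKernel.nonneg [Nontrivial E] {γ Λ : ℝ} {K : E → ℝ}
    (hK : IsBoundedKernel γ Λ K) : 0 ≤ Λ := by
  obtain ⟨z, hz⟩ := exists_ne (0 : E)
  have : 0 < ‖z‖ := norm_pos_iff.2 hz
  exact nonneg_of_mul_nonneg_left ((abs_nonneg _).trans (hK.abs_le z hz)) (by positivity)

lemma IsBoundedKernel.comp_smul [NormedSpace ℝ E] [BorelSpace E] {γ Λ : ℝ} {K : E → ℝ}
    (hK : IsBoundedKernel γ Λ K) {ρ : ℝ} (hρ : 0 < ρ) :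
    IsBoundedKernel γ (Λ * ρ ^ (-γ)) fun z => K (ρ • z) where
  measurable := hK.measurable.comp (measurable_const_smul ρ)
  abs_le z hz := by
    have h := hK.abs_le (ρ • z) (smul_ne_zero hρ.ne' hz)
    rwa [norm_smul, Real.norm_of_nonneg hρ.le, Real.mul_rpow hρ.le (norm_nonneg z),
      ← mul_assoc] at h

end Kernel

variable [NormedSpace ℝ E]

section SecondDifference

variable {φ : E → ℝ}

lemma exists_abs_second_difference_le_sq (hφ : ContDiff ℝ 2 φ) (hc : HasCompactSupport φ) :
    ∃ C, ∀ x z, |2 * φ x - φ (x + z) - φ (x - z)| ≤ C * ‖z‖ ^ 2 := by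
  obtain ⟨C, hC⟩ := (hφ.fderiv_right (m := 1) (by norm_num)).lipschitzWith_of_hasCompactSupport
    (hc.fderiv ℝ) one_ne_zero
  have hd : Differentiable ℝ φ := hφ.differentiable two_ne_zero
  refine ⟨C, fun x z => ?_⟩
  -- The second difference is the increment over `[x - z, x]` of `y ↦ φ (y + z) - φ y`.
  have hincr : ‖(φ (x + z) - φ x) - (φ (x - z + z) - φ (x - z))‖ ≤ C * ‖z‖ * ‖x - (x - z)‖ := by
    refine convex_univ.norm_image_sub_le_of_norm_hasFDerivWithin_le
      (f := fun y => φ (y + z) - φ y) (f' := fun y => fderiv ℝ φ (y + z) - fderiv ℝ φ y)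
      (fun y _ => ?_) (fun y _ => ?_) trivial trivial
    · exact (((hasFDerivAt_comp_add_right z).2 (hd (y + z)).hasFDerivAt).sub
        (hd y).hasFDerivAt).hasFDerivWithinAt
    · simpa [dist_eq_norm] using hC.dist_le_mul (y + z) y
  calc |2 * φ x - φ (x + z) - φ (x - z)|
      = ‖(φ (x + z) - φ x) - (φ (x - z + z) - φ (x - z))‖ := by
        rw [sub_add_cancel, Real.norm_eq_abs, ← abs_neg]; ring_nf
    _ ≤ C * ‖z‖ ^ 2 := by rwa [sub_sub_cancel, mul_assoc, ← sq] at hincr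

lemma exists_abs_second_difference_le_min (hφ : ContDiff ℝ 2 φ) (hc : HasCompactSupport φ) :
    ∃ C, 0 ≤ C ∧ ∀ x z, |2 * φ x - φ (x + z) - φ (x - z)| ≤ C * min (‖z‖ ^ 2) 1 := by
  obtain ⟨C, hC⟩ := exists_abs_second_difference_le_sq hφ hc
  obtain ⟨M, hM⟩ := hc.exists_bound_of_continuous hφ.continuous
  refine ⟨max C (4 * M), le_max_of_le_right (by linarith [(norm_nonneg _).trans (hM 0)]),
    fun x z => ?_⟩
  rw [mul_min_of_nonneg _ _ (le_max_of_le_right (by linarith [(norm_nonneg _).trans (hM 0)]))]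
  refine le_min ((hC x z).trans (by gcongr; exact le_max_left _ _)) ?_
  have hx := abs_le.1 (hM x)
  have hadd := abs_le.1 (hM (x + z))
  have hsub := abs_le.1 (hM (x - z))
  exact (abs_le.2 ⟨by linarith, by linarith⟩ : _ ≤ 4 * M).trans (by simp)

end SecondDifference

lemma integrableOn_Ioi_min_sq_one_mul_rpow {a : ℝ} (ha : a ∈ Set.Ioo (1 : ℝ) 3) :
    IntegrableOn (fun r : ℝ => min (r ^ 2) 1 * r ^ (-a)) (Set.Ioi 0) := by
  rw [← Set.Ioc_union_Ioi_eq_Ioi zero_le_one]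
  refine IntegrableOn.union ?_ ?_
  · have hnear : IntegrableOn (fun r : ℝ => r ^ (2 - a)) (Set.Ioc 0 1) :=
      (intervalIntegrable_iff_integrableOn_Ioc_of_le zero_le_one).1
        (intervalIntegral.intervalIntegrable_rpow' (by linarith [ha.2]))
    refine hnear.congr_fun (fun r hr => ?_) measurableSet_Ioc
    simp only [min_eq_left (pow_le_one₀ hr.1.le hr.2), sub_eq_add_neg, Real.rpow_add hr.1,
      Real.rpow_two]
  · have hfar : IntegrableOn (fun r : ℝ => r ^ (-a)) (Set.Ioi 1) :=
      integrableOn_Ioi_rpow_of_lt (by linarith [ha.1]) one_pos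
    refine hfar.congr_fun (fun r hr => ?_) measurableSet_Ioi
    simp only [min_eq_right (one_le_pow₀ (Set.mem_Ioi.1 hr).le), one_mul]

variable [MeasurableSpace E]

/-- The symmetrized integro-differential operator `L_K` with kernel `K`, taken with respect to an
arbitrary reference measure `μ`. -/
def nonlocalOperator (μ : Measure E) (K φ : E → ℝ) (x : E) : ℝ :=
  (1 / 2) * ∫ z, (2 * φ x - φ (x + z) - φ (x - z)) * K z ∂μ

/-- `L_K u ≤ -f` in the sense of distributions. The pairing of `u` with `L_K φ` is a Bochner
integral, hence meaningful only if `u` is integrable against the decay of `L_K φ`. -/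
def IsWeakSubsolution (μ : Measure E) (K u f : E → ℝ) : Prop :=
  ∀ φ : E → ℝ, ContDiff ℝ ∞ φ → HasCompactSupport φ → (∀ x, 0 ≤ φ x) →
    ∫ x, u x * nonlocalOperator μ K φ x ∂μ ≤ -∫ x, f x * φ x ∂μ

variable [BorelSpace E] [FiniteDimensional ℝ E] {μ : Measure E} [μ.IsAddHaarMeasure]
  {K φ : E → ℝ} {γ Λ : ℝ}

lemma nonlocalOperator_comp_inv_smul (K φ : E → ℝ) {ρ : ℝ} (hρ : 0 < ρ) (x : E) :
    nonlocalOperator μ K (fun y => φ (ρ⁻¹ • y)) x =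
      ρ ^ (finrank ℝ E : ℝ) * nonlocalOperator μ (fun z => K (ρ • z)) φ (ρ⁻¹ • x) := by
  have h := Measure.integral_comp_inv_smul_of_nonneg μ
    (fun z => (2 * φ (ρ⁻¹ • x) - φ (ρ⁻¹ • x + z) - φ (ρ⁻¹ • x - z)) * K (ρ • z)) hρ.le
  simp only [smul_inv_smul₀ hρ.ne', ← smul_add, ← smul_sub, smul_eq_mul] at h
  rw [nonlocalOperator, h, nonlocalOperator, Real.rpow_natCast]
  ring

variable [Nontrivial E]

lemma integrable_min_sq_one_mul_norm_rpow
    (hγ : γ ∈ Set.Ioo (finrank ℝ E : ℝ) (finrank ℝ E + 2)) :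
    Integrable (fun z : E => min (‖z‖ ^ 2) 1 * ‖z‖ ^ (-γ)) μ := by
  rw [integrable_fun_norm_addHaar μ (f := fun r : ℝ => min (r ^ 2) 1 * r ^ (-γ))]
  have hrad := integrableOn_Ioi_min_sq_one_mul_rpow (a := γ - (finrank ℝ E - 1))
    ⟨by linarith [hγ.1], by linarith [hγ.2]⟩
  refine hrad.congr_fun (fun r hr => ?_) measurableSet_Ioi
  have hpow : r ^ (-(γ - (finrank ℝ E - 1))) = r ^ (finrank ℝ E - 1) * r ^ (-γ) := by
    rw [← Real.rpow_natCast, Nat.cast_pred finrank_pos, ← Real.rpow_add hr]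
    ring_nf
  simp only [hpow, smul_eq_mul]
  ring

lemma exists_abs_nonlocalOperator_le (hγ : γ ∈ Set.Ioo (finrank ℝ E : ℝ) (finrank ℝ E + 2))
    (hφ : ContDiff ℝ 2 φ) (hc : HasCompactSupport φ) :
    ∃ C, 0 ≤ C ∧ ∀ K Λ, IsBoundedKernel γ Λ K → ∀ x, |nonlocalOperator μ K φ x| ≤ C * Λ := by
  obtain ⟨C, hC₀, hC⟩ := exists_abs_second_difference_le_min hφ hc
  refine ⟨1 / 2 * (C * ∫ z, min (‖z‖ ^ 2) 1 * ‖z‖ ^ (-γ) ∂μ), by positivity, fun K Λ hK x => ?_⟩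
  have hle : ‖∫ z, (2 * φ x - φ (x + z) - φ (x - z)) * K z ∂μ‖ ≤
      ∫ z, C * Λ * (min (‖z‖ ^ 2) 1 * ‖z‖ ^ (-γ)) ∂μ := by
    refine norm_integral_le_of_norm_le
      ((integrable_min_sq_one_mul_norm_rpow hγ).const_mul _) ?_
    filter_upwards [Measure.ae_ne μ 0] with z hz
    calc ‖(2 * φ x - φ (x + z) - φ (x - z)) * K z‖
        ≤ C * min (‖z‖ ^ 2) 1 * (Λ * ‖z‖ ^ (-γ)) := by
          rw [norm_mul]
          exact mul_le_mul (hC x z) (hK.abs_le z hz) (abs_nonneg _) (by positivity)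
      _ = C * Λ * (min (‖z‖ ^ 2) 1 * ‖z‖ ^ (-γ)) := by ring
  rw [integral_const_mul, Real.norm_eq_abs] at hle
  rw [nonlocalOperator, abs_mul, abs_of_pos one_half_pos]
  linarith

lemma abs_nonlocalOperator_le_of_lt_norm (hK : IsBoundedKernel γ Λ K) (hγ : 0 ≤ γ)
    (hφ : Integrable φ μ) {r : ℝ} (hr : 0 ≤ r) (hsupp : ∀ y, r < ‖y‖ → φ y = 0) {x : E}
    (hx : 2 * r < ‖x‖) :
    |nonlocalOperator μ K φ x| ≤ Λ * (‖x‖ / 2) ^ (-γ) * ∫ y, |φ y| ∂μ := by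
  have hpair : Integrable (fun z => |φ (x + z)| + |φ (x - z)|) μ :=
    (hφ.abs.comp_add_left x).add (hφ.abs.comp_sub_left x)
  have hle : ‖∫ z, (2 * φ x - φ (x + z) - φ (x - z)) * K z ∂μ‖ ≤
      ∫ z, Λ * (‖x‖ / 2) ^ (-γ) * (|φ (x + z)| + |φ (x - z)|) ∂μ := by
    refine norm_integral_le_of_norm_le (hpair.const_mul _) ?_
    filter_upwards [Measure.ae_ne μ 0] with z hz
    rw [hsupp x (by linarith), norm_mul, Real.norm_eq_abs, Real.norm_eq_abs, mul_comm]
    rcases lt_or_ge ‖z‖ (‖x‖ / 2) with hnear | hfar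
    · have hadd : φ (x + z) = 0 := hsupp _ (by linarith [norm_sub_le_norm_add x z])
      have hsub : φ (x - z) = 0 := hsupp _ (by linarith [norm_sub_norm_le x z])
      simp [hadd, hsub]
    · have hker : |K z| ≤ Λ * (‖x‖ / 2) ^ (-γ) :=
        (hK.abs_le z hz).trans <| mul_le_mul_of_nonneg_left
          (Real.rpow_le_rpow_of_nonpos (by linarith) hfar (by linarith)) hK.nonneg
      refine mul_le_mul hker ?_ (abs_nonneg _) ((abs_nonneg _).trans hker)
      rw [mul_zero, zero_sub, ← neg_add', abs_neg]
      exact abs_add_le _ _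
  rw [integral_const_mul, integral_add (hφ.abs.comp_add_left x) (hφ.abs.comp_sub_left x),
    integral_add_left_eq_self (fun y => |φ y|), integral_sub_left_eq_self (fun y => |φ y|),
    Real.norm_eq_abs] at hle
  rw [nonlocalOperator, abs_mul, abs_of_pos one_half_pos]
  linarith

lemma exists_abs_nonlocalOperator_le_decayWeight
    (hγ : γ ∈ Set.Ioo (finrank ℝ E : ℝ) (finrank ℝ E + 2))
    (hφ : ContDiff ℝ 2 φ) (hc : HasCompactSupport φ) :
    ∃ C, 0 ≤ C ∧ ∀ K Λ, IsBoundedKernel γ Λ K →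
      ∀ x, |nonlocalOperator μ K φ x| ≤ C * Λ * decayWeight γ 1 x := by
  have hγ₀ : 0 ≤ γ := (Nat.cast_nonneg _).trans hγ.1.le
  have hφi : Integrable φ μ := hφ.continuous.integrable_of_hasCompactSupport hc
  obtain ⟨C, hC₀, hC⟩ := exists_abs_nonlocalOperator_le (μ := μ) hγ hφ hc
  obtain ⟨r, hr, hsupp⟩ : ∃ r, 1 ≤ r ∧ ∀ y, r < ‖y‖ → φ y = 0 := by
    obtain ⟨r, hr⟩ := hc.isCompact.isBounded.subset_closedBall 0
    refine ⟨max r 1, le_max_right _ _, fun y hy => image_eq_zero_of_notMem_tsupport fun hmem => ?_⟩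
    exact ((le_max_left r 1).trans_lt hy).not_ge (mem_closedBall_zero_iff.1 (hr hmem))
  refine ⟨C * (4 * r) ^ γ + 4 ^ γ * ∫ y, |φ y| ∂μ, by positivity, fun K Λ hK x => ?_⟩
  have hΛ := hK.nonneg
  have hw : 0 ≤ decayWeight γ 1 x := decayWeight_nonneg zero_le_one x
  rcases le_or_gt ‖x‖ (2 * r) with hnear | hfar
  · have hone : 1 ≤ (4 * r) ^ γ * decayWeight γ 1 x := by
      simpa using rpow_neg_le_mul_decayWeight (x := x) (c := 4 * r) hγ₀ zero_le_one zero_le_one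
        (by positivity) (by linarith)
    calc |nonlocalOperator μ K φ x| ≤ C * Λ * 1 := by rw [mul_one]; exact hC K Λ hK x
      _ ≤ C * Λ * ((4 * r) ^ γ * decayWeight γ 1 x) := by gcongr
      _ ≤ C * Λ * ((4 * r) ^ γ * decayWeight γ 1 x) +
            Λ * (4 ^ γ * decayWeight γ 1 x) * ∫ y, |φ y| ∂μ :=
          le_add_of_nonneg_right (by positivity)
      _ = _ := by ring
  · calc |nonlocalOperator μ K φ x| ≤ Λ * (‖x‖ / 2) ^ (-γ) * ∫ y, |φ y| ∂μ :=
          abs_nonlocalOperator_le_of_lt_norm hK hγ₀ hφi (by linarith) hsupp hfar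
      _ ≤ Λ * (4 ^ γ * decayWeight γ 1 x) * ∫ y, |φ y| ∂μ := by
          gcongr
          exact rpow_neg_le_mul_decayWeight hγ₀ zero_le_one (by linarith) four_pos (by linarith)
      _ ≤ C * Λ * ((4 * r) ^ γ * decayWeight γ 1 x) +
            Λ * (4 ^ γ * decayWeight γ 1 x) * ∫ y, |φ y| ∂μ :=
          le_add_of_nonneg_left (by positivity)
      _ = _ := by ring

lemma exists_abs_nonlocalOperator_comp_inv_smul_le
    (hγ : γ ∈ Set.Ioo (finrank ℝ E : ℝ) (finrank ℝ E + 2)) (hK : IsBoundedKernel γ Λ K)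
    (hφ : ContDiff ℝ 2 φ) (hc : HasCompactSupport φ) :
    ∃ C, 0 ≤ C ∧ ∀ ρ, 0 < ρ → ∀ x, |nonlocalOperator μ K (fun y => φ (ρ⁻¹ • y)) x| ≤
      C * ρ ^ (finrank ℝ E - γ) * decayWeight γ ρ x := by
  obtain ⟨C, hC₀, hC⟩ := exists_abs_nonlocalOperator_le_decayWeight (μ := μ) hγ hφ hc
  refine ⟨C * Λ, mul_nonneg hC₀ hK.nonneg, fun ρ hρ x => ?_⟩
  calc |nonlocalOperator μ K (fun y => φ (ρ⁻¹ • y)) x|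
      = ρ ^ (finrank ℝ E : ℝ) * |nonlocalOperator μ (fun z => K (ρ • z)) φ (ρ⁻¹ • x)| := by
        rw [nonlocalOperator_comp_inv_smul K φ hρ, abs_mul, abs_of_pos (by positivity)]
    _ ≤ ρ ^ (finrank ℝ E : ℝ) * (C * (Λ * ρ ^ (-γ)) * decayWeight γ 1 (ρ⁻¹ • x)) := by
        gcongr
        exact hC _ _ (hK.comp_smul hρ) _
    _ = C * Λ * ρ ^ (finrank ℝ E - γ) * decayWeight γ ρ x := by
        rw [decayWeight_one_inv_smul hρ.le, sub_eq_add_neg, Real.rpow_add hρ]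
        ring

section Subsolution

variable {u f : E → ℝ}

lemma IsWeakSubsolution.exists_setIntegral_closedBall_le (hsub : IsWeakSubsolution μ K u f)
    (hγ : γ ∈ Set.Ioo (finrank ℝ E : ℝ) (finrank ℝ E + 2)) (hK : IsBoundedKernel γ Λ K)
    (hu₀ : ∀ x, 0 ≤ u x) (hu : Integrable (fun x => u x * decayWeight γ 1 x) μ)
    (hf₀ : ∀ x, 0 ≤ f x) (hf : LocallyIntegrable f μ) :
    ∃ C, 0 ≤ C ∧ ∀ ρ, 0 < ρ → ∫ x in closedBall 0 ρ, f x ∂μ ≤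
      C * ρ ^ (finrank ℝ E - γ) * ∫ x, u x * decayWeight γ ρ x ∂μ := by
  have hγ₀ : 0 ≤ γ := (Nat.cast_nonneg _).trans hγ.1.le
  let η : ContDiffBump (0 : E) := ⟨1, 2, one_pos, one_lt_two⟩
  obtain ⟨C, hC₀, hC⟩ := exists_abs_nonlocalOperator_comp_inv_smul_le (μ := μ) hγ hK
    η.contDiff η.hasCompactSupport
  refine ⟨C, hC₀, fun ρ hρ => ?_⟩
  set φ : E → ℝ := fun x => η (ρ⁻¹ • x)
  have hφ : ContDiff ℝ ∞ φ := η.contDiff.comp (contDiff_const_smul _)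
  have hφc : HasCompactSupport φ :=
    η.hasCompactSupport.comp_homeomorph (Homeomorph.smulOfNeZero ρ⁻¹ (inv_ne_zero hρ.ne'))
  have hφ_one : ∀ x ∈ closedBall (0 : E) ρ, 1 ≤ φ x := fun x hx => by
    refine (η.one_of_mem_closedBall (mem_closedBall_zero_iff.2 ?_)).ge
    rw [norm_smul, norm_inv, Real.norm_of_nonneg hρ.le]
    exact inv_mul_le_one_of_le₀ (mem_closedBall_zero_iff.1 hx) hρ.le
  have hpair : ‖∫ x, u x * nonlocalOperator μ K φ x ∂μ‖ ≤
      ∫ x, C * ρ ^ (finrank ℝ E - γ) * (u x * decayWeight γ ρ x) ∂μ := by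
    refine norm_integral_le_of_norm_le ((integrable_mul_decayWeight_of_one hu hγ₀ hρ).const_mul _)
      (ae_of_all _ fun x => ?_)
    rw [norm_mul, Real.norm_of_nonneg (hu₀ x), mul_left_comm]
    exact mul_le_mul_of_nonneg_left (hC ρ hρ x) (hu₀ x)
  calc ∫ x in closedBall 0 ρ, f x ∂μ
      ≤ ∫ x, f x * φ x ∂μ := setIntegral_le_integral_mul_of_one_le measurableSet_closedBall hf₀
        (fun x => η.nonneg) hφ_one
        (by simpa [mul_comm] using
          hf.integrable_smul_left_of_hasCompactSupport hφ.continuous hφc)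
    _ ≤ -∫ x, u x * nonlocalOperator μ K φ x ∂μ :=
        le_neg_of_le_neg (hsub φ hφ hφc fun x => η.nonneg)
    _ ≤ ∫ x, C * ρ ^ (finrank ℝ E - γ) * (u x * decayWeight γ ρ x) ∂μ :=
        (neg_le_abs _).trans hpair
    _ = C * ρ ^ (finrank ℝ E - γ) * ∫ x, u x * decayWeight γ ρ x ∂μ := integral_const_mul _ _

lemma IsWeakSubsolution.exists_integral_mul_decayWeight_le (hsub : IsWeakSubsolution μ K u f)
    (hγ : γ ∈ Set.Ioo (finrank ℝ E : ℝ) (finrank ℝ E + 2)) (hK : IsBoundedKernel γ Λ K)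
    (hu₀ : ∀ x, 0 ≤ u x) (hu : Integrable (fun x => u x * decayWeight γ 1 x) μ)
    (hf₀ : ∀ x, 0 ≤ f x) (hf : LocallyIntegrable f μ) :
    ∃ C, 0 ≤ C ∧ ∀ R, 0 < R → Integrable (fun x => f x * decayWeight γ R x) μ ∧
      ∫ x, f x * decayWeight γ R x ∂μ ≤
        C * (R ^ (finrank ℝ E - γ) * ∫ x, u x * decayWeight γ R x ∂μ) := by
  have hγ₀ : 0 ≤ γ := (Nat.cast_nonneg _).trans hγ.1.le
  obtain ⟨C, hC₀, hC⟩ := hsub.exists_setIntegral_closedBall_le hγ hK hu₀ hu hf₀ hf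
  set r : ℝ := 2 ^ (finrank ℝ E - γ)
  have hr : r ∈ Set.Ico (0 : ℝ) 1 :=
    ⟨by positivity, Real.rpow_lt_one_of_one_lt_of_neg one_lt_two (by linarith [hγ.1])⟩
  have hr₁ : 0 < 1 - r := sub_pos.2 hr.2
  refine ⟨2 ^ γ * C * (1 - r)⁻¹, by positivity, fun R hR => ?_⟩
  set I := ∫ x, u x * decayWeight γ R x ∂μ
  have hdyadic (k : ℕ) : (2 ^ k : ℝ) ^ (-γ) * ∫ x in closedBall 0 (2 ^ k * R), f x ∂μ ≤
      C * (R ^ (finrank ℝ E - γ) * I) * r ^ k := by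
    have hI : ∫ x, u x * decayWeight γ (2 ^ k * R) x ∂μ ≤ (2 ^ k) ^ γ * I := by
      rw [← integral_const_mul]
      refine integral_mono (integrable_mul_decayWeight_of_one hu hγ₀ (by positivity))
        ((integrable_mul_decayWeight_of_one hu hγ₀ hR).const_mul _) fun x => ?_
      rw [mul_left_comm]
      exact mul_le_mul_of_nonneg_left
        (decayWeight_mul_le hγ₀ hR (one_le_pow₀ one_le_two) x) (hu₀ x)
    calc (2 ^ k : ℝ) ^ (-γ) * ∫ x in closedBall 0 (2 ^ k * R), f x ∂μ
        ≤ (2 ^ k) ^ (-γ) * (C * (2 ^ k * R) ^ (finrank ℝ E - γ) * ((2 ^ k) ^ γ * I)) := by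
          gcongr
          exact (hC _ (by positivity)).trans (by gcongr)
      _ = C * (R ^ (finrank ℝ E - γ) * I) * r ^ k := by
          rw [Real.mul_rpow (by positivity) hR.le, Real.rpow_pow_comm two_pos.le,
            Real.rpow_neg (by positivity)]
          field_simp
  have hsum := integrable_mul_decayWeight_of_dyadic hf₀ hf hγ₀ hR hr hdyadic
  exact ⟨hsum.1, hsum.2.trans_eq (by ring)⟩

end Subsolution

section Liouville

variable {u : E → ℝ} {p q : ℝ}

lemma IsWeakSubsolution.integrable_rpow (hsub : IsWeakSubsolution μ K u fun x => u x ^ q)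
    (hγ : γ ∈ Set.Ioo (finrank ℝ E : ℝ) (finrank ℝ E + 2)) (hK : IsBoundedKernel γ Λ K)
    (hpq : q.HolderConjugate p) (hcrit : finrank ℝ E ≤ (γ - finrank ℝ E) * p)
    (hu₀ : ∀ x, 0 ≤ u x) (hu : Integrable (fun x => u x * decayWeight γ 1 x) μ)
    (huq : LocallyIntegrable (fun x => u x ^ q) μ) : Integrable (fun x => u x ^ q) μ := by
  have huq₀ : ∀ x, 0 ≤ u x ^ q := fun x => Real.rpow_nonneg (hu₀ x) q
  have hum : AEStronglyMeasurable u μ :=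
    (locallyIntegrable_of_integrable_mul_decayWeight zero_le_one hu).aestronglyMeasurable
  obtain ⟨C, hC₀, hC⟩ := hsub.exists_integral_mul_decayWeight_le hγ hK hu₀ hu huq₀ huq
  set J := ∫ x : E, decayWeight γ 1 x ∂μ
  have hJ : 0 ≤ J := integral_nonneg (decayWeight_nonneg zero_le_one)
  refine integrable_of_integral_mul_decayWeight_le huq₀ huq ((Nat.cast_nonneg _).trans hγ.1.le)
    (A := (C * J ^ (1 / p)) ^ p) (fun R hR => (hC R hR).1) ?_
  filter_upwards [eventually_ge_atTop 1] with R hR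
  have hR₀ : 0 < R := by linarith
  have hholder := rpow_mul_setIntegral_mul_decayWeight_le hγ.1 hpq hcrit hu₀ hum hR Set.univ
    (hC R hR₀).1.integrableOn
  rw [setIntegral_univ, setIntegral_univ] at hholder
  refine le_rpow_of_le_mul_rpow_one_div hpq
    (integral_nonneg fun x => mul_nonneg (huq₀ x) (decayWeight_nonneg hR₀.le x)) (by positivity) ?_
  rw [mul_assoc]
  exact (hC R hR₀).2.trans (by gcongr)

lemma IsWeakSubsolution.integral_rpow_eq_zero (hsub : IsWeakSubsolution μ K u fun x => u x ^ q)
    (hγ : γ ∈ Set.Ioo (finrank ℝ E : ℝ) (finrank ℝ E + 2)) (hK : IsBoundedKernel γ Λ K)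
    (hpq : q.HolderConjugate p) (hcrit : finrank ℝ E ≤ (γ - finrank ℝ E) * p)
    (hu₀ : ∀ x, 0 ≤ u x) (hu : Integrable (fun x => u x * decayWeight γ 1 x) μ)
    (huq : Integrable (fun x => u x ^ q) μ) : ∫ x, u x ^ q ∂μ = 0 := by
  have huq₀ : ∀ x, 0 ≤ u x ^ q := fun x => Real.rpow_nonneg (hu₀ x) q
  obtain ⟨C, -, hC⟩ :=
    hsub.exists_integral_mul_decayWeight_le hγ hK hu₀ hu huq₀ huq.locallyIntegrable
  have hball : Tendsto (fun R => ∫ x in closedBall (0 : E) R, u x ^ q ∂μ) atTop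
      (𝓝 (∫ x, u x ^ q ∂μ)) :=
    (aecover_closedBall tendsto_id).integral_tendsto_of_countably_generated huq
  have hzero := ((tendsto_rpow_mul_integral_mul_decayWeight hγ.1 hpq hcrit hu₀ hu huq).const_mul
    C).const_mul (2 ^ γ)
  rw [mul_zero, mul_zero] at hzero
  refine le_antisymm (le_of_tendsto_of_tendsto hball hzero ?_) (integral_nonneg huq₀)
  filter_upwards [eventually_gt_atTop 0] with R hR
  obtain ⟨hint, hle⟩ := hC R hR
  exact (setIntegral_closedBall_le_decayWeight huq₀ ((Nat.cast_nonneg _).trans hγ.1.le) hR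
    hint).trans (by gcongr)

lemma le_two_mul_mul_conjExponent {d s : ℝ} (hq : 1 < q) (hcrit : 2 * s < d → q ≤ d / (d - 2 * s))
    (hs : 0 ≤ s) : d ≤ 2 * s * q.conjExponent := by
  have hq₁ : 0 < q - 1 := sub_pos.2 hq
  rw [Real.conjExponent, mul_div_assoc', le_div_iff₀ hq₁]
  rcases lt_or_ge (2 * s) d with hlt | hge
  · linarith [(le_div_iff₀ (sub_pos.2 hlt)).1 (hcrit hlt)]
  · nlinarith

end Liouville

end NonlocalLiouville

section Consequences

open Module NonlocalLiouville

theorem liouville_subsolutions_general {E : Type*} [NormedAddCommGroup E] [NormedSpace ℝ E]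
    [FiniteDimensional ℝ E] [Nontrivial E] [MeasurableSpace E] [BorelSpace E]
    {μ : Measure E} [μ.IsAddHaarMeasure] {s : ℝ} (hs : s ∈ Set.Ioo (0 : ℝ) 1)
    {Λ : ℝ} {K : E → ℝ} (hK : IsBoundedKernel (finrank ℝ E + 2 * s) Λ K)
    {q : ℝ} (hq₁ : 1 < q)
    (hq₂ : 2 * s < finrank ℝ E → q ≤ finrank ℝ E / (finrank ℝ E - 2 * s))
    {u : E → ℝ} (hu₀ : ∀ x, 0 ≤ u x) (huq : LocallyIntegrable (fun x => u x ^ q) μ)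
    (hu : Integrable (fun x => u x * decayWeight (finrank ℝ E + 2 * s) 1 x) μ)
    (hsub : IsWeakSubsolution μ K u fun x => u x ^ q) :
    ∀ᵐ x ∂μ, u x = 0 := by
  have hγ : (finrank ℝ E : ℝ) + 2 * s ∈ Set.Ioo (finrank ℝ E : ℝ) (finrank ℝ E + 2) :=
    ⟨by linarith [hs.1], by linarith [hs.2]⟩
  have hpq := Real.HolderConjugate.conjExponent hq₁
  have hcrit : finrank ℝ E ≤ ((finrank ℝ E : ℝ) + 2 * s - finrank ℝ E) * q.conjExponent := by
    simpa only [add_sub_cancel_left] using le_two_mul_mul_conjExponent hq₁ hq₂ hs.1.le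
  have hint := hsub.integrable_rpow hγ hK hpq hcrit hu₀ hu huq
  have hzero := hsub.integral_rpow_eq_zero hγ hK hpq hcrit hu₀ hu hint
  have hae := (integral_eq_zero_iff_of_nonneg (fun x => Real.rpow_nonneg (hu₀ x) q) hint).1 hzero
  filter_upwards [hae] with x hx
  exact (Real.rpow_eq_zero (hu₀ x) hpq.ne_zero).1 hx

variable {n : ℕ} {s q : ℝ}

lemma IsAdmissibleKernel.isBoundedKernel {lam Lam : ℝ} {K : Euc n → ℝ}
    (hK : IsAdmissibleKernel n s lam Lam K) :
    IsBoundedKernel (finrank ℝ (Euc n) + 2 * s) Lam K := by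
  obtain ⟨hlam, -, hmeas, -, hbounds⟩ := hK
  refine ⟨hmeas, fun z hz => ?_⟩
  have hpos : 0 ≤ K z := le_trans (by positivity) (hbounds z hz).1
  simpa only [abs_of_nonneg hpos, finrank_euclideanSpace_fin, neg_add'] using (hbounds z hz).2

lemma MemLqLoc.locallyIntegrable {u : Euc n → ℝ} (hu : MemLqLoc n q u) :
    LocallyIntegrable fun x => u x ^ q := fun x =>
  ⟨ball 0 (‖x‖ + 1), isOpen_ball.mem_nhds (by simp), hu _ (by positivity)⟩

lemma MemL1Tail.integrable_mul_decayWeight {u : Euc n → ℝ} (hu : MemL1Tail n s u)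
    (hu₀ : ∀ x, 0 ≤ u x) :
    Integrable fun x => u x * decayWeight (finrank ℝ (Euc n) + 2 * s) 1 x := by
  simpa only [decayWeight, div_one, finrank_euclideanSpace_fin, neg_add', abs_of_nonneg (hu₀ _)]
    using hu.2

end Consequences

/-- Liouville theorem for subsolutions of `L_K u = -u^q`. -/
theorem liouville_subsolutions
    (n : ℕ) (hn : 1 ≤ n) (s : ℝ) (hs : s ∈ Set.Ioo (0 : ℝ) 1)
    (lam Lam : ℝ) (K : Euc n → ℝ) (hK : IsAdmissibleKernel n s lam Lam K)
    (q : ℝ) (hq1 : 1 < q)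
    (hq2 : 2 * s < (n : ℝ) → q ≤ (n : ℝ) / ((n : ℝ) - 2 * s))
    (u : Euc n → ℝ) (humeas : Measurable u) (hupos : ∀ x, 0 ≤ u x)
    (huloc : MemLqLoc n q u) (hutail : MemL1Tail n s u)
    (hsub : ∀ φ : Euc n → ℝ, IsTestFun n φ → (∀ x, 0 ≤ φ x) →
      (∫ x : Euc n, u x * LK n K φ x) ≤ -∫ x : Euc n, u x ^ q * φ x) :
    ∀ᵐ x : Euc n, u x = 0 := by
  have : NeZero n := ⟨Nat.one_le_iff_ne_zero.1 hn⟩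
  exact liouville_subsolutions_general hs hK.isBoundedKernel hq1 (by simpa using hq2) hupos
    huloc.locallyIntegrable (hutail.integrable_mul_decayWeight hupos)
    fun φ hφ hφc hφ₀ => hsub φ ⟨hφ, hφc⟩ hφ₀
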